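/- Let m ≥ 3 be an integer and ε ∈ (0,1) be fixed, and for α ∈ (ε,1) define l_ε(α) = ∫_{-1+α}^{0} [2( (1/α - 1/(1+u)) + (ε^{m-2}/(m-1))((1+u)^{-(m-1)} - α^{-(m-1)}) )]^{-1/2} du. Then l_ε(α) → +∞ as α → ε⁺. -/

import Mathlib

open MeasureTheory Filter

/-!
By conservation of energy the half-length is `∫_α^b (2 (F v - F α))^{-1/2} dv`, where `F'` is the
force. The force vanishes linearly at the saddle `a`, say `F' x ≤ K (x - a)`, so
`2 (F v - F α) ≤ K (v - a)²`, and the half-length is at least `K^{-1/2} ∫_α^b dv / (v - a)`, which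
is `K^{-1/2} log ((b - a) / (α - a))`. This diverges as `α → a⁺`.
For the regularized force, Bernoulli's inequality gives the bound with `K = (m - 2) / ε³`, the slope
of the force at the saddle.
-/

lemma setIntegral_Ioo_comp_add_left {E : Type*} [NormedAddCommGroup E] [NormedSpace ℝ E]
    (f : ℝ → E) {a b : ℝ} (hab : a ≤ b) (d : ℝ) :
    ∫ u in Set.Ioo a b, f (d + u) = ∫ v in (d + a)..(d + b), f v := by
  rw [← integral_Ioc_eq_integral_Ioo, ← intervalIntegral.integral_of_le hab,
    intervalIntegral.integral_comp_add_left]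

section ConservativeEquation

open Set Topology

/-- The length of the `y`-interval on which the solution of `v'' = F'(v)` starting at rest from `α`
reaches `b`. It uses the conserved energy `v'² / 2 - F v`; the integrand takes the value `0` at the
endpoint `v = α`, where it is singular. -/
noncomputable def halfLength (F : ℝ → ℝ) (b α : ℝ) : ℝ :=
  ∫ v in α..b, (√(2 * (F v - F α)))⁻¹

variable {F F' : ℝ → ℝ} {a b α K : ℝ}

lemma intervalIntegrable_inv_sqrt_sub (hαb : α ≤ b) :
    IntervalIntegrable (fun v => (√(v - α))⁻¹) volume α b := by
  have hrpow := (intervalIntegral.intervalIntegrable_rpow' (a := 0) (b := b - α)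
    (r := -(1 / 2)) (by norm_num)).comp_sub_right α
  rw [zero_add, sub_add_cancel] at hrpow
  refine hrpow.congr fun v hv => ?_
  rw [uIoc_of_le hαb] at hv
  rw [Real.sqrt_eq_rpow, ← Real.rpow_neg (sub_nonneg.2 hv.1.le)]

-- The difference quotient at `α`, extended by the derivative, is continuous and positive on the
-- compact interval, hence bounded below.
lemma exists_pos_mul_sub_le_sub {d : ℝ} (hαb : α ≤ b) (hF : ContinuousOn F (Icc α b))
    (hd : HasDerivAt F d α) (hd_pos : 0 < d) (hlt : ∀ v ∈ Ioc α b, F α < F v) :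
    ∃ c > 0, ∀ v ∈ Icc α b, c * (v - α) ≤ F v - F α := by
  have hcont : ContinuousOn (dslope F α) (Icc α b) := by
    intro v hv
    rcases eq_or_ne v α with rfl | hne
    · exact (continuousAt_dslope_same.2 hd.differentiableAt).continuousWithinAt
    · exact (continuousWithinAt_dslope_of_ne hne).2 (hF v hv)
  have hpos : ∀ v ∈ Icc α b, 0 < dslope F α v := by
    intro v hv
    rcases hv.1.eq_or_lt with rfl | hlt_v
    · rwa [dslope_same, hd.deriv]
    · rw [dslope_of_ne _ hlt_v.ne', slope_pos_iff_of_le hlt_v.le]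
      exact hlt v ⟨hlt_v, hv.2⟩
  obtain ⟨w, hw, hmin⟩ := isCompact_Icc.exists_isMinOn (nonempty_Icc.2 hαb) hcont
  refine ⟨dslope F α w, hpos w hw, fun v hv => ?_⟩
  rw [← sub_smul_dslope F α v, smul_eq_mul, mul_comm]
  exact mul_le_mul_of_nonneg_left (hmin hv) (sub_nonneg.2 hv.1)

lemma lt_of_hasDerivAt_pos (hF : ∀ x ∈ Icc α b, HasDerivAt F (F' x) x)
    (hpos : ∀ x ∈ Icc α b, 0 < F' x) {v : ℝ} (hv : v ∈ Ioc α b) : F α < F v := by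
  have hmono : StrictMonoOn F (Icc α b) := strictMonoOn_of_hasDerivWithinAt_pos (convex_Icc α b)
    (HasDerivAt.continuousOn hF)
    (fun x hx => (hF x (interior_subset hx)).hasDerivWithinAt)
    (fun x hx => hpos x (interior_subset hx))
  exact hmono (left_mem_Icc.2 (hv.1.le.trans hv.2)) (Ioc_subset_Icc_self hv) hv.1

lemma intervalIntegrable_inv_sqrt_energy (hαb : α ≤ b)
    (hF : ∀ x ∈ Icc α b, HasDerivAt F (F' x) x) (hpos : ∀ x ∈ Icc α b, 0 < F' x) :
    IntervalIntegrable (fun v => (√(2 * (F v - F α)))⁻¹) volume α b := by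
  have hcontF : ContinuousOn F (Icc α b) := HasDerivAt.continuousOn hF
  have hα : α ∈ Icc α b := left_mem_Icc.2 hαb
  have hlt : ∀ v ∈ Ioc α b, F α < F v := fun v hv => lt_of_hasDerivAt_pos hF hpos hv
  obtain ⟨c, hc, hlower⟩ := exists_pos_mul_sub_le_sub hαb hcontF (hF α hα) (hpos α hα) hlt
  have hcont : ContinuousOn (fun v => (√(2 * (F v - F α)))⁻¹) (Ioc α b) := by
    have := hcontF.mono Ioc_subset_Icc_self
    refine ContinuousOn.inv₀ (by fun_prop) fun v hv => ?_
    have := sub_pos.2 (hlt v hv)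
    positivity
  refine ((intervalIntegrable_inv_sqrt_sub hαb).const_mul (√(2 * c))⁻¹).mono_fun' ?_ ?_ <;>
    rw [uIoc_of_le hαb]
  · exact hcont.aestronglyMeasurable measurableSet_Ioc
  filter_upwards [ae_restrict_mem measurableSet_Ioc] with v hv
  have hvα : 0 < v - α := sub_pos.2 hv.1
  rw [Real.norm_of_nonneg (by positivity), ← mul_inv, ← Real.sqrt_mul (by positivity), mul_assoc]
  gcongr
  exact hlower v (Ioc_subset_Icc_self hv)

lemma two_mul_sub_le_mul_sq_sub_sq (hF : ∀ x ∈ Icc α b, HasDerivAt F (F' x) x)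
    (hle : ∀ x ∈ Icc α b, F' x ≤ K * (x - a)) {v : ℝ} (hv : v ∈ Icc α b) :
    2 * (F v - F α) ≤ K * ((v - a) ^ 2 - (α - a) ^ 2) := by
  have hquad : ∀ x, HasDerivAt (fun x => F α + K / 2 * ((x - a) ^ 2 - (α - a) ^ 2))
      (K * (x - a)) x := fun x => by
    refine ((((((hasDerivAt_id x).sub_const a).fun_pow 2).sub_const _).const_mul _).const_add
      (F α)).congr_deriv ?_
    simp only [id_eq]
    ring
  have hFv : F v ≤ F α + K / 2 * ((v - a) ^ 2 - (α - a) ^ 2) :=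
    image_le_of_deriv_right_le_deriv_boundary (HasDerivAt.continuousOn hF)
      (fun x hx => (hF x (Ico_subset_Icc_self hx)).hasDerivWithinAt) (by simp)
      (HasDerivAt.continuousOn fun x _ => hquad x) (fun x _ => (hquad x).hasDerivWithinAt)
      (fun x hx => hle x (Ico_subset_Icc_self hx)) hv
  linarith

lemma mul_log_le_halfLength (haα : a < α) (hαb : α ≤ b)
    (hF : ∀ x ∈ Icc α b, HasDerivAt F (F' x) x) (hpos : ∀ x ∈ Icc α b, 0 < F' x)
    (hle : ∀ x ∈ Icc α b, F' x ≤ K * (x - a)) :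
    (√K)⁻¹ * Real.log ((b - a) / (α - a)) ≤ halfLength F b α := by
  have hα : α ∈ Icc α b := left_mem_Icc.2 hαb
  have hK : 0 < K :=
    pos_of_mul_pos_left ((hpos α hα).trans_le (hle α hα)) (sub_pos.2 haα).le
  have hlog : ∫ v in α..b, (v - a)⁻¹ = Real.log ((b - a) / (α - a)) := by
    rw [intervalIntegral.integral_comp_sub_right (fun x : ℝ => x⁻¹),
      integral_inv_of_pos (by linarith) (by linarith)]
  have hintegrable : IntervalIntegrable (fun v => (v - a)⁻¹) volume α b := by
    refine ContinuousOn.intervalIntegrable_of_Icc hαb (ContinuousOn.inv₀ (by fun_prop) ?_)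
    exact fun v hv => (sub_pos.2 (haα.trans_le hv.1)).ne'
  rw [← hlog, ← intervalIntegral.integral_const_mul]
  refine intervalIntegral.integral_mono_on_of_le_Ioo hαb (hintegrable.const_mul _)
    (intervalIntegrable_inv_sqrt_energy hαb hF hpos) fun v hv => ?_
  have henergy : 0 < F v - F α := sub_pos.2 (lt_of_hasDerivAt_pos hF hpos (Ioo_subset_Ioc_self hv))
  have hva : 0 ≤ v - a := by linarith [hv.1]
  rw [← mul_inv]
  gcongr
  calc √(2 * (F v - F α)) ≤ √(K * ((v - a) ^ 2 - (α - a) ^ 2)) :=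
        Real.sqrt_le_sqrt (two_mul_sub_le_mul_sq_sub_sq hF hle (Ioo_subset_Icc_self hv))
    _ ≤ √(K * (v - a) ^ 2) := by
        gcongr
        exact sub_le_self _ (sq_nonneg _)
    _ = √K * (v - a) := by rw [Real.sqrt_mul hK.le, Real.sqrt_sq hva]

lemma tendsto_log_div_sub_nhdsGT (hab : a < b) :
    Tendsto (fun α => Real.log ((b - a) / (α - a))) (𝓝[>] a) atTop := by
  have hsub : Tendsto (fun α => α - a) (𝓝[>] a) (𝓝[>] 0) := by
    refine tendsto_nhdsWithin_iff.2 ⟨?_, ?_⟩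
    · exact ((continuous_sub_right a).tendsto' a 0 (sub_self a)).mono_left nhdsWithin_le_nhds
    · filter_upwards [self_mem_nhdsWithin] with α hα using sub_pos.2 (mem_Ioi.1 hα)
  simp only [div_eq_mul_inv]
  exact Real.tendsto_log_atTop.comp
    ((tendsto_inv_nhdsGT_zero.comp hsub).const_mul_atTop (sub_pos.2 hab))

theorem tendsto_halfLength_atTop (hab : a < b) (hF : ∀ x ∈ Ioc a b, HasDerivAt F (F' x) x)
    (hpos : ∀ x ∈ Ioc a b, 0 < F' x) (hle : ∀ x ∈ Ioc a b, F' x ≤ K * (x - a)) :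
    Tendsto (halfLength F b) (𝓝[>] a) atTop := by
  have hb : b ∈ Ioc a b := right_mem_Ioc.2 hab
  have hK : 0 < K := pos_of_mul_pos_left ((hpos b hb).trans_le (hle b hb)) (sub_pos.2 hab).le
  refine tendsto_atTop_mono' _ ?_
    ((tendsto_log_div_sub_nhdsGT hab).const_mul_atTop (inv_pos.2 (Real.sqrt_pos.2 hK)))
  filter_upwards [Ioo_mem_nhdsGT hab] with α hα
  have hsub : Icc α b ⊆ Ioc a b := Icc_subset_Ioc hα.1 le_rfl
  exact mul_log_le_halfLength hα.1 hα.2.le (fun x hx => hF x (hsub hx))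
    (fun x hx => hpos x (hsub hx)) (fun x hx => hle x (hsub hx))

end ConservativeEquation

section RegularizedMEMS

/-- The force `1 / v² - ε^(m-2) / v^m` of the regularized equilibrium equation in the variable
`v = 1 + u`, with `m = n + 2`. -/
noncomputable def memsForce (n : ℕ) (ε v : ℝ) : ℝ :=
  1 / v ^ 2 - ε ^ n / v ^ (n + 2)

/-- The antiderivative of `memsForce n ε` that vanishes at infinity. -/
noncomputable def memsPotential (n : ℕ) (ε v : ℝ) : ℝ :=
  ε ^ n / ((n : ℝ) + 1) * (v ^ (n + 1))⁻¹ - 1 / v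

variable (n : ℕ) {ε v : ℝ}

lemma hasDerivAt_memsPotential (ε : ℝ) (hv : v ≠ 0) :
    HasDerivAt (memsPotential n ε) (memsForce n ε v) v := by
  have hpow := ((hasDerivAt_pow (n + 1) v).fun_inv (pow_ne_zero _ hv)).const_mul
    (ε ^ n / ((n : ℝ) + 1))
  have hinv := hasDerivAt_inv hv
  simp only [← one_div] at hinv
  have hn : (n : ℝ) + 1 ≠ 0 := by positivity
  refine (hpow.fun_sub hinv).congr_deriv ?_
  simp only [memsForce]
  push_cast
  field_simp
  ring

lemma memsForce_eq_one_sub_div_pow_div (ε : ℝ) (hv : v ≠ 0) :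
    memsForce n ε v = (1 - (ε / v) ^ n) / v ^ 2 := by
  rw [memsForce, div_pow]
  field_simp
  ring

lemma memsForce_pos {n : ℕ} (hn : n ≠ 0) (hε : 0 ≤ ε) (hv : ε < v) : 0 < memsForce n ε v := by
  have hv0 : 0 < v := hε.trans_lt hv
  rw [memsForce_eq_one_sub_div_pow_div n ε hv0.ne']
  have hratio : (ε / v) ^ n < 1 := pow_lt_one₀ (by positivity) ((div_lt_one hv0).2 hv) hn
  exact div_pos (sub_pos.2 hratio) (by positivity)

lemma memsForce_le_mul_sub (hε : 0 < ε) (hv : ε ≤ v) :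
    memsForce n ε v ≤ n / ε ^ 3 * (v - ε) := by
  have hv0 : 0 < v := hε.trans_le hv
  have hbernoulli : 1 + n * (ε / v - 1) ≤ (ε / v) ^ n :=
    one_add_mul_sub_le_pow (by linarith [div_pos hε hv0]) n
  calc memsForce n ε v = (1 - (ε / v) ^ n) / v ^ 2 := memsForce_eq_one_sub_div_pow_div n ε hv0.ne'
    _ ≤ n * (1 - ε / v) / v ^ 2 := by gcongr; linarith
    _ = n / v ^ 3 * (v - ε) := by field_simp
    _ ≤ n / ε ^ 3 * (v - ε) := by gcongr

lemma tendsto_halfLength_memsPotential {n : ℕ} (hn : n ≠ 0) (hε : 0 < ε) {b : ℝ} (hb : ε < b) :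
    Tendsto (halfLength (memsPotential n ε) b) (nhdsWithin ε (Set.Ioi ε)) atTop :=
  tendsto_halfLength_atTop hb
    (fun _ hx => hasDerivAt_memsPotential n ε (hε.trans hx.1).ne')
    (fun _ hx => memsForce_pos hn hε.le hx.1)
    (fun _ hx => memsForce_le_mul_sub n hε hx.1.le)

end RegularizedMEMS

/-- Divergence of the regularized trajectory half-length at the saddle: for fixed
`ε ∈ (0,1)` and integer `m ≥ 3`, `l_ε(α) → +∞` as `α → ε⁺`, where
`l_ε(α) = ∫_{-1+α}^0 [2((1/α - 1/(1+u)) + (ε^(m-2)/(m-1))((1+u)^{-(m-1)} - α^{-(m-1)}))]^{-1/2} du`. -/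
theorem stmt_18 (m : ℕ) (hm : 3 ≤ m) (ε : ℝ) (hε : ε ∈ Set.Ioo (0 : ℝ) 1) :
    Tendsto
      (fun α : ℝ => ∫ u in Set.Ioo (-1 + α) (0 : ℝ),
        (Real.sqrt (2 * ((1 / α - 1 / (1 + u))
          + (ε ^ (m - 2) / ((m : ℝ) - 1))
            * (((1 + u) ^ (m - 1))⁻¹ - (α ^ (m - 1))⁻¹))))⁻¹)
      (nhdsWithin ε (Set.Ioi ε)) atTop := by
  obtain ⟨n, rfl⟩ : ∃ n, m = n + 2 := ⟨m - 2, by lia⟩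
  refine (tendsto_halfLength_memsPotential (n := n) (by lia) hε.1 hε.2).congr' ?_
  filter_upwards [Ioo_mem_nhdsGT hε.2] with α hα
  have hshift := setIntegral_Ioo_comp_add_left
    (fun v => (√(2 * (memsPotential n ε v - memsPotential n ε α)))⁻¹)
    (show -1 + α ≤ 0 by linarith [hα.2]) 1
  rw [add_neg_cancel_left, add_zero] at hshift
  rw [halfLength, ← hshift]
  congr 1 with u
  congr 3
  simp only [memsPotential, Nat.add_sub_cancel, show n + 2 - 1 = n + 1 from rfl]
  push_cast
  ring
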